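/- Let S be a set of 2k points in the plane in general position. Then the number of non-crossing perfect matchings of S is at least the k-th Catalan number: pm(S) ≥ C_k. -/

import Mathlib

open scoped Classical

/-- Points in the plane. -/
abbrev Pt : Type := ℝ × ℝ

/-- A finite planar point set is in *general position* if no three of its
points are collinear. -/
def GeneralPosition (S : Finset Pt) : Prop :=
  ∀ p ∈ S, ∀ q ∈ S, ∀ r ∈ S, p ≠ q → p ≠ r → q ≠ r →
    ¬ Collinear ℝ ({p, q, r} : Set Pt)

/-- The closed straight-line segment spanned by an unordered pair of points. -/
noncomputable def seg : Sym2 Pt → Set Pt :=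
  Sym2.lift ⟨fun a b => segment ℝ a b, fun a b => segment_symm ℝ a b⟩

/-- `M` is a non-crossing perfect matching of `S`: a partition of `S` into
unordered pairs (of distinct points) whose closed segments are pairwise disjoint. -/
def IsNCMatching (S : Finset Pt) (M : Finset (Sym2 Pt)) : Prop :=
  (∀ e ∈ M, ¬ e.IsDiag) ∧
  (∀ e ∈ M, ∀ p, p ∈ e → p ∈ S) ∧
  (∀ p ∈ S, ∃! e, e ∈ M ∧ p ∈ e) ∧
  (∀ e ∈ M, ∀ f ∈ M, e ≠ f → Disjoint (seg e) (seg f))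

/-- The number of non-crossing perfect matchings of `S`. -/
noncomputable def pm (S : Finset Pt) : ℕ :=
  Set.ncard {M : Finset (Sym2 Pt) | IsNCMatching S M}

/-- `S` is in convex position: no point of `S` lies in the convex hull of the
other points. -/
def ConvexPosition (S : Finset Pt) : Prop :=
  ∀ p ∈ S, p ∉ convexHull ℝ (↑(S.erase p) : Set Pt)

/-- The signed side of `X` with respect to the directed line from `Q` to `P`.
The two open half-planes bounded by the line through `Q` and `P` are
`{X | 0 < sideOf Q P X}` and `{X | sideOf Q P X < 0}`. -/
def sideOf (Q P X : Pt) : ℝ :=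
  (P.1 - Q.1) * (X.2 - Q.2) - (P.2 - Q.2) * (X.1 - Q.1)

/-- Segment `AB` pierces segment `CD`: the closed segments are disjoint, but the
affine line through `A` and `B` meets the closed segment `CD`. -/
def Pierces (A B C D : Pt) : Prop :=
  Disjoint (segment ℝ A B) (segment ℝ C D) ∧
  ((affineSpan ℝ ({A, B} : Set Pt) : Set Pt) ∩ segment ℝ C D).Nonempty

/-- The matching `M` of `S` has the *piercing property*: it contains pairs
`{A,B}` and `{C,D}` with `A` on the boundary of the convex hull of `S`
and `AB` piercing `CD`. -/
def HasPiercing (S : Finset Pt) (M : Finset (Sym2 Pt)) : Prop :=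
  ∃ A B C D : Pt, s(A, B) ∈ M ∧ s(C, D) ∈ M ∧
    A ∈ frontier (convexHull ℝ (S : Set Pt)) ∧ Pierces A B C D

/-- The exceptional order type with interior point `Q`: `Q` is the unique point
of `S` interior to the convex hull of `S`, and for every other point `P` of `S`
each open half-plane bounded by the line through `Q` and `P` contains exactly
two points of `S`. -/
def ExceptionalAt (S : Finset Pt) (Q : Pt) : Prop :=
  (↑S ∩ interior (convexHull ℝ (S : Set Pt))) = {Q} ∧
  ∀ P ∈ S, P ≠ Q →
    (S.filter (fun X => 0 < sideOf Q P X)).card = 2 ∧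
    (S.filter (fun X => sideOf Q P X < 0)).card = 2

/-- The exceptional order type of Figure 1. -/
def Exceptional (S : Finset Pt) : Prop :=
  ∃ Q ∈ S, ExceptionalAt S Q

noncomputable def NC (S : Finset Pt) : Finset (Finset (Sym2 Pt)) :=
  S.sym2.powerset.filter (IsNCMatching S)

lemma mem_NC {S : Finset Pt} {M : Finset (Sym2 Pt)} : M ∈ NC S ↔ IsNCMatching S M := by
  unfold NC
  rw [Finset.mem_filter, Finset.mem_powerset]
  constructor
  · exact fun h => h.2
  · intro h
    refine ⟨?_, h⟩
    intro e he
    rw [Finset.mem_sym2_iff]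
    exact fun p hp => h.2.1 e he p hp

lemma pm_eq (S : Finset Pt) : pm S = (NC S).card := by
  unfold pm
  rw [← Set.ncard_coe_finset]
  congr 1
  ext M
  simp [mem_NC]

lemma sideOf_combo (A P X Y : Pt) (a b : ℝ) (hab : a + b = 1) :
    sideOf A P (a • X + b • Y) = a * sideOf A P X + b * sideOf A P Y := by
  obtain rfl : b = 1 - a := by linarith
  simp only [sideOf, Prod.fst_add, Prod.snd_add, Prod.smul_fst, Prod.smul_snd, smul_eq_mul]
  ring

lemma seg_neg {A P : Pt} {e : Sym2 Pt} (h : ∀ p ∈ e, sideOf A P p < 0) :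
    ∀ x ∈ seg e, sideOf A P x < 0 := by
  induction e using Sym2.ind with
  | _ X Y =>
    rintro x ⟨a, b, ha, hb, hab, rfl⟩
    have hX := h X (Sym2.mem_mk_left X Y)
    have hY := h Y (Sym2.mem_mk_right X Y)
    rw [sideOf_combo _ _ _ _ _ _ hab]
    rcases ha.eq_or_lt with h0 | h0
    · subst h0
      obtain rfl : b = 1 := by linarith
      linarith
    · nlinarith [mul_pos h0 (neg_pos.2 hX), mul_nonneg hb (neg_pos.2 hY).le]

lemma seg_pos {A P : Pt} {e : Sym2 Pt} (h : ∀ p ∈ e, 0 < sideOf A P p) :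
    ∀ x ∈ seg e, 0 < sideOf A P x := by
  induction e using Sym2.ind with
  | _ X Y =>
    rintro x ⟨a, b, ha, hb, hab, rfl⟩
    have hX := h X (Sym2.mem_mk_left X Y)
    have hY := h Y (Sym2.mem_mk_right X Y)
    rw [sideOf_combo _ _ _ _ _ _ hab]
    rcases ha.eq_or_lt with h0 | h0
    · subst h0
      obtain rfl : b = 1 := by linarith
      linarith
    · nlinarith [mul_pos h0 hX, mul_nonneg hb hY.le]

lemma sideOf_left (A P : Pt) : sideOf A P A = 0 := by simp [sideOf]
lemma sideOf_right (A P : Pt) : sideOf A P P = 0 := by simp only [sideOf]; ring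

lemma seg_zero (A P : Pt) : ∀ x ∈ seg s(A, P), sideOf A P x = 0 := by
  rintro x ⟨a, b, ha, hb, hab, rfl⟩
  rw [sideOf_combo _ _ _ _ _ _ hab, sideOf_left, sideOf_right]; ring

lemma sideOf_ne {S : Finset Pt} (hgp : GeneralPosition S) {A X Y : Pt} (hA : A ∈ S) (hX : X ∈ S)
    (hY : Y ∈ S) (h1 : A ≠ X) (h2 : A ≠ Y) (h3 : X ≠ Y) : sideOf A X Y ≠ 0 := by
  intro h0
  apply hgp A hA X hX Y hY h1 h2 h3
  rw [collinear_iff_of_mem (p₀ := A) (by simp)]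
  refine ⟨X - A, ?_⟩
  intro p hp
  simp only [Set.mem_insert_iff, Set.mem_singleton_iff] at hp
  simp only [sideOf] at h0
  rcases hp with rfl | rfl | rfl
  · exact ⟨0, by simp⟩
  · exact ⟨1, by simp⟩
  · by_cases hx : X.1 - A.1 = 0
    · have hy : X.2 - A.2 ≠ 0 := by
        intro hy
        exact h1 (Prod.ext (by linarith) (by linarith))
      refine ⟨(p.2 - A.2) / (X.2 - A.2), ?_⟩
      have : p.1 - A.1 = 0 := by
        rw [hx] at h0
        have : (X.2 - A.2) * (p.1 - A.1) = 0 := by linarith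
        exact (mul_eq_zero.1 this).resolve_left hy
      ext
      · simp [hx]; linarith
      · simp; field_simp; ring
    · refine ⟨(p.1 - A.1) / (X.1 - A.1), ?_⟩
      ext
      · simp; field_simp; ring
      · simp; field_simp; linarith

/-- lexicographic half-plane condition -/
def HP (A X : Pt) : Prop := A.1 < X.1 ∨ (A.1 = X.1 ∧ A.2 < X.2)

lemma exists_extreme (S : Finset Pt) (h : S.Nonempty) :
    ∃ A ∈ S, ∀ X ∈ S, X ≠ A → HP A X := by
  obtain ⟨A, hA, hm⟩ := S.exists_min_image (fun p => (toLex p : ℝ ×ₗ ℝ)) h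
  refine ⟨A, hA, fun X hX hne => ?_⟩
  have := hm X hX
  rw [Prod.Lex.toLex_le_toLex] at this
  rcases this with h | ⟨h, h'⟩
  · exact Or.inl h
  · refine Or.inr ⟨h, lt_of_le_of_ne h' fun h2 => hne (Prod.ext h.symm h2.symm)⟩

lemma sideOf_trans {A U V W : Pt} (hU : HP A U) (hV : HP A V) (hW : HP A W)
    (h1 : 0 < sideOf A U V) (h2 : 0 < sideOf A V W) : 0 < sideOf A U W := by
  simp only [sideOf, HP] at *
  obtain ⟨a1, a2⟩ := A
  obtain ⟨u1, u2⟩ := U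
  obtain ⟨v1, v2⟩ := V
  obtain ⟨w1, w2⟩ := W
  simp only at *
  obtain ⟨u1, rfl⟩ : ∃ t, u1 = a1 + t := ⟨u1 - a1, by ring⟩
  obtain ⟨u2, rfl⟩ : ∃ t, u2 = a2 + t := ⟨u2 - a2, by ring⟩
  obtain ⟨v1, rfl⟩ : ∃ t, v1 = a1 + t := ⟨v1 - a1, by ring⟩
  obtain ⟨v2, rfl⟩ : ∃ t, v2 = a2 + t := ⟨v2 - a2, by ring⟩
  obtain ⟨w1, rfl⟩ : ∃ t, w1 = a1 + t := ⟨w1 - a1, by ring⟩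
  obtain ⟨w2, rfl⟩ : ∃ t, w2 = a2 + t := ⟨w2 - a2, by ring⟩
  simp only [add_sub_cancel_left, lt_add_iff_pos_right, left_eq_add] at *
  have hw1 : 0 ≤ w1 := by rcases hW with h | h; exacts [h.le, h.1.ge]
  have hv : 0 < v1 := by
    rcases hV with h | ⟨rfl, h⟩
    · exact h
    · nlinarith [mul_nonneg h.le hw1]
  have hu : 0 < u1 := by
    rcases hU with h | ⟨rfl, h⟩
    · exact h
    · nlinarith [mul_pos h hv]
  have key : v1 * (u1 * w2 - u2 * w1) = u1 * (v1 * w2 - v2 * w1) + w1 * (u1 * v2 - u2 * v1) := by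
    ring
  have : 0 < v1 * (u1 * w2 - u2 * w1) := by
    rw [key]; have := mul_pos hu h2; have := mul_nonneg hw1 h1.le; linarith
  exact (mul_pos_iff_of_pos_left hv).1 this

lemma sideOf_swap (A X Y : Pt) : sideOf A Y X = - sideOf A X Y := by
  simp only [sideOf]; ring

noncomputable def Lo (S : Finset Pt) (A P : Pt) := S.filter (fun X => sideOf A P X < 0)
noncomputable def Hi (S : Finset Pt) (A P : Pt) := S.filter (fun X => 0 < sideOf A P X)

lemma glue {S : Finset Pt} (hgp : GeneralPosition S) {A P : Pt} (hA : A ∈ S) (hP : P ∈ S)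
    (hne : A ≠ P) {M N : Finset (Sym2 Pt)} (hM : IsNCMatching (Lo S A P) M)
    (hN : IsNCMatching (Hi S A P) N) : IsNCMatching S (insert s(A, P) (M ∪ N)) := by
  have hMs : ∀ e ∈ M, ∀ p ∈ e, sideOf A P p < 0 := fun e he p hp =>
    (Finset.mem_filter.1 (hM.2.1 e he p hp)).2
  have hNs : ∀ e ∈ N, ∀ p ∈ e, 0 < sideOf A P p := fun e he p hp =>
    (Finset.mem_filter.1 (hN.2.1 e he p hp)).2
  have hZs : ∀ p ∈ s(A, P), sideOf A P p = 0 := by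
    intro p hp
    rcases Sym2.mem_iff.1 hp with rfl | rfl
    · exact sideOf_left _ _
    · exact sideOf_right _ _
  refine ⟨?_, ?_, ?_, ?_⟩
  · intro e he
    rw [Finset.mem_insert, Finset.mem_union] at he
    rcases he with rfl | he | he
    · simpa using hne
    · exact hM.1 e he
    · exact hN.1 e he
  · intro e he p hp
    rw [Finset.mem_insert, Finset.mem_union] at he
    rcases he with rfl | he | he
    · rcases Sym2.mem_iff.1 hp with rfl | rfl <;> assumption
    · exact (Finset.mem_filter.1 (hM.2.1 e he p hp)).1
    · exact (Finset.mem_filter.1 (hN.2.1 e he p hp)).1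
  · intro p hp
    rcases lt_trichotomy (sideOf A P p) 0 with h | h | h
    · obtain ⟨e, ⟨he, hpe⟩, hu⟩ := hM.2.2.1 p (Finset.mem_filter.2 ⟨hp, h⟩)
      refine ⟨e, ⟨by simp [he], hpe⟩, ?_⟩
      rintro f ⟨hf, hpf⟩
      rw [Finset.mem_insert, Finset.mem_union] at hf
      rcases hf with rfl | hf | hf
      · exact absurd (hZs p hpf) h.ne
      · exact hu f ⟨hf, hpf⟩
      · exact absurd (hNs f hf p hpf) h.not_gt
    · refine ⟨s(A, P), ⟨by simp, ?_⟩, ?_⟩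
      · by_contra hc
        rw [Sym2.mem_iff, not_or] at hc
        exact sideOf_ne hgp hA hP hp hne (Ne.symm hc.1) (Ne.symm hc.2) h
      · rintro f ⟨hf, hpf⟩
        rw [Finset.mem_insert, Finset.mem_union] at hf
        rcases hf with rfl | hf | hf
        · rfl
        · exact absurd h (hMs f hf p hpf).ne
        · exact absurd h (hNs f hf p hpf).ne'
    · obtain ⟨e, ⟨he, hpe⟩, hu⟩ := hN.2.2.1 p (Finset.mem_filter.2 ⟨hp, h⟩)
      refine ⟨e, ⟨by simp [he], hpe⟩, ?_⟩
      rintro f ⟨hf, hpf⟩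
      rw [Finset.mem_insert, Finset.mem_union] at hf
      rcases hf with rfl | hf | hf
      · exact absurd (hZs p hpf) h.ne'
      · exact absurd (hMs f hf p hpf) h.not_gt
      · exact hu f ⟨hf, hpf⟩
  · intro e he f hf hef
    rw [Finset.mem_insert, Finset.mem_union] at he hf
    rw [Set.disjoint_left]
    intro x hxe hxf
    rcases he with rfl | he | he <;> rcases hf with rfl | hf | hf
    · exact hef rfl
    · linarith [seg_zero A P x hxe, seg_neg (hMs f hf) x hxf]
    · linarith [seg_zero A P x hxe, seg_pos (hNs f hf) x hxf]
    · linarith [seg_zero A P x hxf, seg_neg (hMs e he) x hxe]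
    · exact Set.disjoint_left.1 (hM.2.2.2 e he f hf hef) hxe hxf
    · linarith [seg_pos (hNs f hf) x hxf, seg_neg (hMs e he) x hxe]
    · linarith [seg_zero A P x hxf, seg_pos (hNs e he) x hxe]
    · linarith [seg_neg (hMs f hf) x hxf, seg_pos (hNs e he) x hxe]
    · exact Set.disjoint_left.1 (hN.2.2.2 e he f hf hef) hxe hxf

lemma recover_lo {S : Finset Pt} {A P : Pt} {M N : Finset (Sym2 Pt)}
    (hM : IsNCMatching (Lo S A P) M) (hN : IsNCMatching (Hi S A P) N) :
    (insert s(A, P) (M ∪ N)).filter (fun e => ∀ p ∈ e, sideOf A P p < 0) = M := by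
  ext e
  rw [Finset.mem_filter, Finset.mem_insert, Finset.mem_union]
  constructor
  · rintro ⟨rfl | he | he, h⟩
    · have := h A (Sym2.mem_mk_left _ _)
      rw [sideOf_left] at this
      exact absurd this (lt_irrefl _)
    · exact he
    · have h1 := h _ e.out_fst_mem
      have h2 := (Finset.mem_filter.1 (hN.2.1 e he _ e.out_fst_mem)).2
      exact absurd h1 h2.not_gt
  · exact fun he => ⟨Or.inr (Or.inl he), fun p hp => (Finset.mem_filter.1 (hM.2.1 e he p hp)).2⟩

lemma recover_hi {S : Finset Pt} {A P : Pt} {M N : Finset (Sym2 Pt)}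
    (hM : IsNCMatching (Lo S A P) M) (hN : IsNCMatching (Hi S A P) N) :
    (insert s(A, P) (M ∪ N)).filter (fun e => ∀ p ∈ e, 0 < sideOf A P p) = N := by
  ext e
  rw [Finset.mem_filter, Finset.mem_insert, Finset.mem_union]
  constructor
  · rintro ⟨rfl | he | he, h⟩
    · have := h A (Sym2.mem_mk_left _ _)
      rw [sideOf_left] at this
      exact absurd this (lt_irrefl _)
    · have h1 := h _ e.out_fst_mem
      have h2 := (Finset.mem_filter.1 (hM.2.1 e he _ e.out_fst_mem)).2
      exact absurd h1 h2.not_gt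
    · exact he
  · exact fun he => ⟨Or.inr (Or.inr he), fun p hp => (Finset.mem_filter.1 (hN.2.1 e he p hp)).2⟩

lemma card_lo_hi {S : Finset Pt} (hgp : GeneralPosition S) {A P : Pt} (hA : A ∈ S) (hP : P ∈ S)
    (hne : A ≠ P) : (Lo S A P).card + (Hi S A P).card + 2 = S.card := by
  have h1 : Disjoint (Lo S A P) (Hi S A P) := by
    rw [Finset.disjoint_left]
    intro x hx hy
    exact (Finset.mem_filter.1 hx).2.not_gt (Finset.mem_filter.1 hy).2
  have h2 : Lo S A P ∪ Hi S A P = (S.erase A).erase P := by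
    ext x
    simp only [Lo, Hi, Finset.mem_union, Finset.mem_filter, Finset.mem_erase]
    constructor
    · rintro (⟨hx, h⟩ | ⟨hx, h⟩)
      all_goals
        refine ⟨?_, ?_, hx⟩
        · rintro rfl
          rw [sideOf_right] at h
          exact lt_irrefl _ h
        · rintro rfl
          rw [sideOf_left] at h
          exact lt_irrefl _ h
    · rintro ⟨hxP, hxA, hx⟩
      rcases lt_or_gt_of_ne (sideOf_ne hgp hA hP hx hne (Ne.symm hxA) (Ne.symm hxP)) with h | h
      · exact Or.inl ⟨hx, h⟩
      · exact Or.inr ⟨hx, h⟩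
  have hPe : P ∈ S.erase A := Finset.mem_erase.2 ⟨hne.symm, hP⟩
  have h3 := Finset.card_erase_add_one hPe
  have h4 := Finset.card_erase_add_one hA
  rw [← Finset.card_union_of_disjoint h1, h2]
  omega

lemma lo_lt {S : Finset Pt} {A : Pt} (hext : ∀ X ∈ S, X ≠ A → HP A X) {X Y : Pt}
    (hX : X ∈ S) (hXA : X ≠ A) (hY : Y ∈ S) (hYA : Y ≠ A) (h : 0 < sideOf A X Y) :
    (Lo S A X).card < (Lo S A Y).card := by
  apply Finset.card_lt_card
  rw [Finset.ssubset_iff_of_subset]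
  · refine ⟨X, Finset.mem_filter.2 ⟨hX, ?_⟩, ?_⟩
    · rw [sideOf_swap]; linarith
    · intro hc
      have := (Finset.mem_filter.1 hc).2
      rw [sideOf_right] at this
      exact lt_irrefl _ this
  · intro Z hZ
    obtain ⟨hZS, hZ⟩ := Finset.mem_filter.1 hZ
    have hZA : Z ≠ A := by
      rintro rfl
      rw [sideOf_left] at hZ
      exact lt_irrefl _ hZ
    refine Finset.mem_filter.2 ⟨hZS, ?_⟩
    have h1 : 0 < sideOf A Z X := by rw [sideOf_swap]; linarith
    have := sideOf_trans (hext Z hZS hZA) (hext X hX hXA) (hext Y hY hYA) h1 h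
    rw [sideOf_swap]; linarith

lemma exists_rank {S : Finset Pt} (hgp : GeneralPosition S) {A : Pt} (hA : A ∈ S)
    (hext : ∀ X ∈ S, X ≠ A → HP A X) (j : ℕ) (hj : j + 1 < S.card) :
    ∃ P ∈ S, P ≠ A ∧ (Lo S A P).card = j := by
  have hc := Finset.card_erase_add_one hA
  have hinj : Set.InjOn (fun P => (Lo S A P).card) (S.erase A : Finset Pt) := by
    intro X hX Y hY hXY
    have hX := Finset.mem_erase.1 (Finset.mem_coe.1 hX)
    have hY := Finset.mem_erase.1 (Finset.mem_coe.1 hY)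
    by_contra hne
    simp only at hXY
    rcases lt_or_gt_of_ne (sideOf_ne hgp hA hX.2 hY.2 hX.1.symm hY.1.symm hne) with h | h
    · have := lo_lt hext hY.2 hY.1 hX.2 hX.1 (by rw [sideOf_swap]; linarith)
      omega
    · have := lo_lt hext hX.2 hX.1 hY.2 hY.1 h
      omega
  have hmaps : (S.erase A).image (fun P => (Lo S A P).card) = Finset.range (S.card - 1) := by
    apply Finset.eq_of_subset_of_card_le
    · intro i hi
      obtain ⟨P, hP, rfl⟩ := Finset.mem_image.1 hi
      have hP := Finset.mem_erase.1 hP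
      have := card_lo_hi hgp hA hP.2 hP.1.symm
      rw [Finset.mem_range]
      omega
    · rw [Finset.card_image_of_injOn hinj, Finset.card_range]
      omega
  have : j ∈ (S.erase A).image (fun P => (Lo S A P).card) := by
    rw [hmaps, Finset.mem_range]; omega
  obtain ⟨P, hP, h⟩ := Finset.mem_image.1 this
  have hP := Finset.mem_erase.1 hP
  exact ⟨P, hP.2, hP.1, h⟩

lemma GeneralPosition.mono {S T : Finset Pt} (h : GeneralPosition S) (hT : T ⊆ S) :
    GeneralPosition T :=
  fun p hp q hq r hr => h p (hT hp) q (hT hq) r (hT hr)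

lemma pm_sum {S : Finset Pt} (hgp : GeneralPosition S) {A : Pt} (hA : A ∈ S) {n : ℕ}
    (P : Fin n → Pt) (hP : ∀ i, P i ∈ S ∧ P i ≠ A) (hinj : Function.Injective P) :
    ∑ i, pm (Lo S A (P i)) * pm (Hi S A (P i)) ≤ pm S := by
  simp only [pm_eq, ← Finset.card_product]
  rw [← Finset.card_sigma]
  refine Finset.card_le_card_of_injOn
    (fun x => insert s(A, P x.1) (x.2.1 ∪ x.2.2)) ?_ ?_
  · rintro ⟨i, M, N⟩ hx
    simp only [Finset.mem_coe, Finset.mem_sigma, Finset.mem_product, mem_NC] at hx ⊢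
    exact glue hgp hA (hP i).1 (hP i).2.symm hx.2.1 hx.2.2
  · rintro ⟨i, M, N⟩ hx ⟨j, M', N'⟩ hy hxy
    simp only [Finset.mem_coe, Finset.mem_sigma, Finset.mem_product, mem_NC] at hx hy hxy
    have hg := glue hgp hA (hP i).1 (hP i).2.symm hx.2.1 hx.2.2
    have hij : i = j := by
      apply hinj
      have := (hg.2.2.1 A hA).unique (y₁ := s(A, P i)) (y₂ := s(A, P j))
        ⟨by simp, by simp⟩ ⟨by rw [hxy]; simp, by simp⟩
      exact Sym2.congr_right.1 this
    subst hij
    have h1 := recover_lo hx.2.1 hx.2.2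
    have h2 := recover_hi hx.2.1 hx.2.2
    rw [hxy, recover_lo hy.2.1 hy.2.2] at h1
    rw [hxy, recover_hi hy.2.1 hy.2.2] at h2
    rw [h1, h2]

/-- Any set `S` of `2k` points in general position has at least
`C_k` non-crossing perfect matchings. -/
theorem catalan_le_pm (k : ℕ) (S : Finset Pt) (hcard : S.card = 2 * k)
    (hgp : GeneralPosition S) :
    catalan k ≤ pm S := by
  induction k using Nat.strong_induction_on generalizing S with
  | _ k ih =>
    cases k with
    | zero =>
      have : S = ∅ := by simpa using hcard
      subst this
      rw [catalan_zero, pm_eq, Nat.one_le_iff_ne_zero, Finset.card_ne_zero]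
      refine ⟨∅, mem_NC.2 ?_⟩
      simp [IsNCMatching]
    | succ n =>
      obtain ⟨A, hA, hext⟩ := exists_extreme S (Finset.card_pos.1 (by omega))
      have hr : ∀ i : Fin n.succ, ∃ P ∈ S, P ≠ A ∧ (Lo S A P).card = 2 * (i : ℕ) := fun i =>
        exists_rank hgp hA hext _ (by have := i.2; omega)
      choose P hPS hPA hPc using hr
      have hinj : Function.Injective P := by
        intro i j hij
        have h1 := hPc i
        have h2 := hPc j
        rw [hij] at h1
        ext
        omega
      refine le_trans ?_ (pm_sum hgp hA P (fun i => ⟨hPS i, hPA i⟩) hinj)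
      rw [catalan_succ]
      apply Finset.sum_le_sum
      intro i _
      have hi := i.2
      have hc := card_lo_hi hgp hA (hPS i) (hPA i).symm
      have h1 := hPc i
      apply Nat.mul_le_mul
      · exact ih _ hi _ h1 (hgp.mono (Finset.filter_subset _ _))
      · exact ih _ (by omega) _ (by omega) (hgp.mono (Finset.filter_subset _ _))
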